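/- Let p be an odd prime and w ∈ V_5. Suppose there is no nonzero linear form ℓ over 𝔽_p with ℓ² apolar to w, and suppose there exists a nonzero binary quadratic form q over 𝔽_p apolar to w with Disc(q) ≠ 0 (so w has Waring type ⟨1,1⟩ or ⟨2⟩). Then S(w) = −χ(Disc(q))·p²; in particular S(w) = −p² if q splits into two non-proportional linear factors over 𝔽_p, and S(w) = p² if q is irreducible over 𝔽_p. -/

import Mathlib

open Finset

/-- Multiplication of binary forms encoded by coefficient tuples: a binary form
`∑ i, f i • x^(a-i) * y^i` of degree `a` is encoded as the tuple `f : Fin (a+1) → k`,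
and multiplication of forms is convolution of coefficient tuples. -/
def formMul {k : Type*} [CommRing k] {a b : ℕ} (f : Fin (a + 1) → k)
    (g : Fin (b + 1) → k) : Fin (a + b + 1) → k :=
  fun i => ∑ q : Fin (a + 1) × Fin (b + 1),
    if (q.1 : ℕ) + (q.2 : ℕ) = (i : ℕ) then f q.1 * g q.2 else 0

/-- The pairing `(w, v) = ∑ i, w i * v i` between `V_n` and `V_n^*`. -/
def pair {k : Type*} [CommRing k] {n : ℕ} (w v : Fin (n + 1) → k) : k :=
  ∑ i, w i * v i

/-- A binary quintic form is singular if it is nonzero and, over an algebraic closure,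
it is divisible by the square of a nonzero linear form. -/
def IsSingularQuintic {k : Type*} [Field k] (v : Fin 6 → k) : Prop :=
  v ≠ 0 ∧ ∃ (l : Fin 2 → AlgebraicClosure k) (c : Fin 4 → AlgebraicClosure k),
    l ≠ 0 ∧
    (fun i => algebraMap k (AlgebraicClosure k) (v i)) = formMul (formMul l l) c

open scoped Classical in
/-- The exponential sum `S(w)` over binary quintic forms that are zero or singular. -/
noncomputable def expSum (p : ℕ) [Fact p.Prime] (w : Fin 6 → ZMod p) : ℂ :=
  ∑ v : Fin 6 → ZMod p,
    if v = 0 ∨ IsSingularQuintic v then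
      Complex.exp (2 * Real.pi * Complex.I * ((pair w v).val : ℂ) / (p : ℂ))
    else 0

/-- The discriminant of a binary quadratic form `f₀x² + f₁xy + f₂y²`. -/
def disc {k : Type*} [CommRing k] (f : Fin 3 → k) : k := f 1 ^ 2 - 4 * f 0 * f 2


/-- The value at `(x, y)` of the binary form with coefficient tuple `f`. -/
def formEval {k : Type*} [CommRing k] {n : ℕ} (f : Fin (n + 1) → k) (x y : k) : k :=
  ∑ i, f i * x ^ (n - (i : ℕ)) * y ^ (i : ℕ)

theorem formEval_formMul {k : Type*} [CommRing k] {a b : ℕ} (f : Fin (a + 1) → k)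
    (g : Fin (b + 1) → k) (x y : k) :
    formEval (formMul f g) x y = formEval f x y * formEval g x y := by
  unfold formEval formMul
  rw [Finset.sum_mul_sum, ← Fintype.sum_prod_type']
  simp_rw [Finset.sum_mul]
  rw [Finset.sum_comm]
  refine Finset.sum_congr rfl fun q _ => ?_
  obtain ⟨⟨i, hi⟩, ⟨j, hj⟩⟩ := q
  rw [Finset.sum_eq_single (⟨i + j, by omega⟩ : Fin (a + b + 1))]
  · simp only [if_true]
    rw [show a + b - (i + j) = (a - i) + (b - j) by omega, pow_add, pow_add]
    ring
  · rintro ⟨l, hl⟩ _ hne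
    have : i + j ≠ l := fun h => hne (by simp [h])
    simp [this]
  · simp

theorem map_formMul {k K : Type*} [CommRing k] [CommRing K] (φ : k →+* K) {a b : ℕ}
    (f : Fin (a + 1) → k) (g : Fin (b + 1) → k) :
    (fun i => φ (formMul f g i)) = formMul (fun i => φ (f i)) (fun i => φ (g i)) := by
  funext i
  simp only [formMul, map_sum, apply_ite φ, map_mul, map_zero]

/-- The dehomogenization `f(1, X)` of a binary form. -/
noncomputable def formPoly {k : Type*} [CommRing k] {n : ℕ} (f : Fin (n + 1) → k) :
    Polynomial k :=
  formEval (fun i => Polynomial.C (f i)) 1 Polynomial.X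

theorem formPoly_formMul {k : Type*} [CommRing k] {a b : ℕ} (f : Fin (a + 1) → k)
    (g : Fin (b + 1) → k) : formPoly (formMul f g) = formPoly f * formPoly g := by
  rw [formPoly, map_formMul, formEval_formMul, formPoly, formPoly]

theorem formPoly_coeff {k : Type*} [CommRing k] {n : ℕ} (f : Fin (n + 1) → k)
    (i : Fin (n + 1)) : (formPoly f).coeff i = f i := by
  simp only [formPoly, formEval, one_pow, mul_one, Polynomial.finsetSum_coeff,
    Polynomial.coeff_C_mul, Polynomial.coeff_X_pow]
  rw [Finset.sum_eq_single i]
  · simp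
  · intro j _ hj
    have : (i : ℕ) ≠ j := fun h => hj (Fin.ext h.symm)
    simp [this]
  · simp

theorem formPoly_injective {k : Type*} [CommRing k] {n : ℕ} :
    Function.Injective (formPoly : (Fin (n + 1) → k) → Polynomial k) := fun f g h =>
  funext fun i => by rw [← formPoly_coeff f, h, formPoly_coeff]

theorem formPoly_zero {k : Type*} [CommRing k] {n : ℕ} :
    formPoly (0 : Fin (n + 1) → k) = 0 := by
  simp [formPoly, formEval]

theorem formPoly_ne_zero {k : Type*} [CommRing k] {n : ℕ} {f : Fin (n + 1) → k}
    (hf : f ≠ 0) : formPoly f ≠ 0 := fun h => hf (formPoly_injective (h.trans formPoly_zero.symm))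

theorem formPoly_natDegree_le {k : Type*} [CommRing k] {n : ℕ} (f : Fin (n + 1) → k) :
    (formPoly f).natDegree ≤ n := by
  unfold formPoly formEval
  refine Polynomial.natDegree_sum_le_of_forall_le _ _ fun i _ => ?_
  rw [one_pow, mul_one]
  exact (Polynomial.natDegree_C_mul_X_pow_le _ _).trans (Nat.lt_succ_iff.mp i.2)

theorem formPoly_of_natDegree_le {k : Type*} [CommRing k] {n : ℕ} {P : Polynomial k}
    (hP : P.natDegree ≤ n) : formPoly (fun i : Fin (n + 1) => P.coeff i) = P := by
  conv_rhs => rw [P.as_sum_range_C_mul_X_pow' (Nat.lt_succ_of_le hP), Finset.sum_range]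
  simp [formPoly, formEval]

theorem formMul_left_injective {k : Type*} [CommRing k] [IsDomain k] {a b : ℕ}
    {f : Fin (a + 1) → k} (hf : f ≠ 0) :
    Function.Injective (formMul f : (Fin (b + 1) → k) → _) := fun g h hgh => by
  have := congrArg formPoly hgh
  rw [formPoly_formMul, formPoly_formMul] at this
  exact formPoly_injective (mul_left_cancel₀ (formPoly_ne_zero hf) this)

theorem formMul_ne_zero {k : Type*} [CommRing k] [IsDomain k] {a b : ℕ}
    {f : Fin (a + 1) → k} {g : Fin (b + 1) → k} (hf : f ≠ 0) (hg : g ≠ 0) :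
    formMul f g ≠ 0 := fun h => by
  have := congrArg formPoly h
  rw [formPoly_formMul, formPoly_zero] at this
  exact mul_ne_zero (formPoly_ne_zero hf) (formPoly_ne_zero hg) this

theorem ne_zero_of_disc_ne_zero {k : Type*} [CommRing k] {D : Fin 3 → k} (hD : disc D ≠ 0) :
    D ≠ 0 := by
  rintro rfl
  simp [disc] at hD

theorem disc_formMul {k : Type*} [CommRing k] (l m : Fin 2 → k) :
    disc (formMul l m) = (l 0 * m 1 - l 1 * m 0) ^ 2 := by
  simp [disc, formMul, Fintype.sum_prod_type, Fin.sum_univ_succ]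
  ring

/-- A nonzero linear form generates the linear forms that vanish at its root. -/
theorem exists_smul_of_cross_eq {k : Type*} [Field k] {l m : Fin 2 → k} (hl : l ≠ 0)
    (h : l 0 * m 1 = l 1 * m 0) : ∃ c : k, m = c • l := by
  by_cases h0 : l 0 = 0
  · have h1 : l 1 ≠ 0 := fun h1 => hl (by ext i; fin_cases i <;> simp [h0, h1])
    refine ⟨m 1 / l 1, ?_⟩
    have : m 0 = 0 := by simpa [h0, h1] using h.symm
    ext i; fin_cases i <;> simp [*]
  · refine ⟨m 0 / l 0, ?_⟩
    ext i; fin_cases i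
    · simp [h0]
    · simp; field_simp; linear_combination h

theorem exists_eq_formMul_of_formEval_eq_zero {k : Type*} [Field k] {n : ℕ} {l : Fin 2 → k}
    (hl : l ≠ 0) {f : Fin (n + 1 + 1) → k} (h : formEval f (l 1) (-l 0) = 0) :
    ∃ g : Fin (n + 1) → k, formPoly f = formPoly l * formPoly g := by
  have hlp : formPoly l = Polynomial.C (l 0) + Polynomial.C (l 1) * Polynomial.X := by
    simp [formPoly, formEval, Fin.sum_univ_succ]
  by_cases h1 : l 1 = 0
  · have h0 : l 0 ≠ 0 := fun h0 => hl (by ext i; fin_cases i <;> simp [h0, h1])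
    have hlast : f (Fin.last _) = 0 := by
      rw [formEval, Fin.sum_univ_castSucc, Finset.sum_eq_zero] at h
      · simpa [h1, h0] using h
      · intro i _
        have : n + 1 - (i : ℕ) ≠ 0 := by omega
        simp [h1, this]
    refine ⟨fun i => f i.castSucc / l 0, ?_⟩
    rw [hlp, h1]
    simp only [formPoly, formEval]
    rw [Fin.sum_univ_castSucc, hlast, Finset.mul_sum]
    simp only [map_zero, zero_mul, add_zero, one_pow, mul_one]
    refine Finset.sum_congr rfl fun i _ => ?_
    rw [← mul_assoc, ← Polynomial.C_mul, mul_div_cancel₀ _ h0]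
    rfl
  · have hroot : (formPoly f).IsRoot (-l 0 / l 1) := by
      have hev : (formPoly f).eval (-l 0 / l 1) * l 1 ^ (n + 1) = formEval f (l 1) (-l 0) := by
        simp only [formPoly, formEval, Polynomial.eval_finsetSum, Finset.sum_mul]
        refine Finset.sum_congr rfl fun i _ => ?_
        have hi : (i : ℕ) ≤ n + 1 := by omega
        simp only [one_pow, mul_one, Polynomial.eval_mul, Polynomial.eval_C, Polynomial.eval_pow,
          Polynomial.eval_X, div_pow]
        rw [← pow_sub_mul_pow (l 1) hi]
        field_simp
      rw [h] at hev
      exact (mul_eq_zero.mp hev).resolve_right (pow_ne_zero _ h1)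
    obtain ⟨Q, hQ⟩ := Polynomial.dvd_iff_isRoot.mpr hroot
    have hfac : formPoly f = formPoly l * (Polynomial.C (l 1)⁻¹ * Q) := by
      rw [hQ, hlp]
      have e1 : (Polynomial.C (l 1) * Polynomial.C (l 1)⁻¹ : Polynomial k) = 1 := by
        rw [← Polynomial.C_mul, mul_inv_cancel₀ h1, Polynomial.C_1]
      rw [neg_div, div_eq_mul_inv, Polynomial.C_neg, Polynomial.C_mul]
      linear_combination (-Polynomial.X * Q) * e1
    refine ⟨fun i => (Polynomial.C (l 1)⁻¹ * Q).coeff i, ?_⟩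
    rw [formPoly_of_natDegree_le, hfac]
    rcases eq_or_ne Q 0 with rfl | hQ0
    · simp
    · rw [Polynomial.natDegree_C_mul (inv_ne_zero h1)]
      have := formPoly_natDegree_le f
      rw [hQ, Polynomial.natDegree_mul (Polynomial.X_sub_C_ne_zero _) hQ0,
        Polynomial.natDegree_X_sub_C] at this
      omega

theorem formEval_root {k : Type*} [CommRing k] (l : Fin 2 → k) :
    formEval l (l 1) (-l 0) = 0 := by
  simp [formEval, Fin.sum_univ_succ]; ring

theorem formEval_root' {k : Type*} [CommRing k] (l m : Fin 2 → k) :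
    formEval m (l 1) (-l 0) = m 0 * l 1 - m 1 * l 0 := by
  simp [formEval, Fin.sum_univ_succ]; ring

theorem formEval_formMul_self {k : Type*} [CommRing k] {a b : ℕ} (f : Fin (a + 1) → k)
    (g : Fin (b + 1) → k) (x y : k) :
    formEval (formMul (formMul f f) g) x y = formEval f x y ^ 2 * formEval g x y := by
  rw [formEval_formMul, formEval_formMul, sq]

theorem formPoly_formMul_self {k : Type*} [CommRing k] {a b : ℕ} (f : Fin (a + 1) → k)
    (g : Fin (b + 1) → k) :
    formPoly (formMul (formMul f f) g) = formPoly f ^ 2 * formPoly g := by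
  rw [formPoly_formMul, formPoly_formMul, sq]

/-- If `D²` and `l²` divide the same nonzero quintic, then `l` divides `D`. -/
theorem formEval_eq_zero_of_sq_dvd {k : Type*} [Field k] {D : Fin 3 → k} {l m : Fin 2 → k}
    {c : Fin 4 → k} (hl : l ≠ 0) (hm : m ≠ 0)
    (h : (formMul (formMul l l) c : Fin 6 → k) = formMul (formMul D D) m) :
    formEval D (l 1) (-l 0) = 0 := by
  by_contra hD
  have hm0 : formEval m (l 1) (-l 0) = 0 := by
    have h' := ((formEval_formMul_self l c (l 1) (-l 0)).symm.trans
      (congrArg (fun v : Fin 6 → k => formEval v (l 1) (-l 0)) h)).trans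
      (formEval_formMul_self D m (l 1) (-l 0))
    rw [formEval_root] at h'
    simpa [hD] using h'.symm
  obtain ⟨g, hg⟩ := exists_eq_formMul_of_formEval_eq_zero (n := 0) hl hm0
  have hlc : (formMul l c : Fin 5 → k) = formMul (formMul D D) g := by
    have hP := ((formPoly_formMul_self l c).symm.trans
      (congrArg (fun v : Fin 6 → k => formPoly v) h)).trans (formPoly_formMul_self D m)
    rw [hg] at hP
    refine formPoly_injective (((formPoly_formMul l c).trans ?_).trans
      (formPoly_formMul_self D g).symm)
    refine mul_left_cancel₀ (formPoly_ne_zero hl) ?_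
    linear_combination hP
  have hg0 : formEval g (l 1) (-l 0) = 0 := by
    have h' := ((formEval_formMul l c (l 1) (-l 0)).symm.trans
      (congrArg (fun v : Fin 5 → k => formEval v (l 1) (-l 0)) hlc)).trans
      (formEval_formMul_self D g (l 1) (-l 0))
    rw [formEval_root] at h'
    simpa [hD] using h'.symm
  have : g = 0 := by
    ext i; fin_cases i; simpa [formEval] using hg0
  exact formPoly_ne_zero hm (by rw [hg, this, formPoly_zero, mul_zero])

/-- If the squares of two independent linear forms divide a quintic, so does the square of
their product. -/
theorem exists_sq_dvd_of_linear_sq_dvd {k : Type*} [Field k] {l₁ l₂ : Fin 2 → k}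
    {c₁ c₂ : Fin 4 → k} (hl : l₁ 0 * l₂ 1 - l₁ 1 * l₂ 0 ≠ 0)
    (h : (formMul (formMul l₁ l₁) c₁ : Fin 6 → k) = formMul (formMul l₂ l₂) c₂) :
    ∃ m : Fin 2 → k, (formMul (formMul l₁ l₁) c₁ : Fin 6 → k) =
      formMul (formMul (formMul l₁ l₂ : Fin 3 → k) (formMul l₁ l₂ : Fin 3 → k)) m := by
  have hl₂ : l₂ ≠ 0 := by rintro rfl; simp at hl
  have hr : formEval l₁ (l₂ 1) (-l₂ 0) ≠ 0 := by
    rw [formEval_root']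
    exact fun h0 => hl (by linear_combination h0)
  have hc : formEval c₁ (l₂ 1) (-l₂ 0) = 0 := by
    have h' := ((formEval_formMul_self l₁ c₁ (l₂ 1) (-l₂ 0)).symm.trans
      (congrArg (fun v : Fin 6 → k => formEval v (l₂ 1) (-l₂ 0)) h)).trans
      (formEval_formMul_self l₂ c₂ (l₂ 1) (-l₂ 0))
    rw [formEval_root l₂] at h'
    simpa [hr] using h'
  obtain ⟨d, hd⟩ := exists_eq_formMul_of_formEval_eq_zero (n := 2) hl₂ hc
  have hP := ((formPoly_formMul_self l₁ c₁).symm.trans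
      (congrArg (fun v : Fin 6 → k => formPoly v) h)).trans (formPoly_formMul_self l₂ c₂)
  have hlc : (formMul (formMul l₁ l₁) d : Fin 5 → k) = formMul l₂ c₂ := by
    refine formPoly_injective (((formPoly_formMul_self l₁ d).trans ?_).trans
      (formPoly_formMul l₂ c₂).symm)
    refine mul_left_cancel₀ (formPoly_ne_zero hl₂) ?_
    rw [hd] at hP
    linear_combination hP
  have hd0 : formEval d (l₂ 1) (-l₂ 0) = 0 := by
    have h' := ((formEval_formMul_self l₁ d (l₂ 1) (-l₂ 0)).symm.trans
      (congrArg (fun v : Fin 5 → k => formEval v (l₂ 1) (-l₂ 0)) hlc)).trans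
      (formEval_formMul l₂ c₂ (l₂ 1) (-l₂ 0))
    rw [formEval_root l₂] at h'
    simpa [hr] using h'
  obtain ⟨m, hm⟩ := exists_eq_formMul_of_formEval_eq_zero (n := 1) hl₂ hd0
  refine ⟨m, formPoly_injective ?_⟩
  have e : formPoly (formMul l₁ l₂ : Fin 3 → k) = formPoly l₁ * formPoly l₂ :=
    formPoly_formMul l₁ l₂
  refine ((formPoly_formMul_self l₁ c₁).trans ?_).trans
    (formPoly_formMul_self (formMul l₁ l₂ : Fin 3 → k) m).symm
  rw [e, hd, hm]
  ring

theorem exists_root_of_quadratic {K : Type*} [Field K] [IsAlgClosed K] (h2 : (2 : K) ≠ 0)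
    (D : Fin 3 → K) : ∃ l : Fin 2 → K, l ≠ 0 ∧ formEval D (l 1) (-l 0) = 0 := by
  by_cases h0 : D 0 = 0
  · refine ⟨![0, 1], fun h => by simpa using congrFun h 1, ?_⟩
    simp [formEval, Fin.sum_univ_succ, h0]
  · obtain ⟨s, hs⟩ := IsAlgClosed.exists_pow_nat_eq (disc D) (n := 2) (by norm_num)
    refine ⟨![2 * D 0, D 1 - s], fun h => ?_, ?_⟩
    · have := congrFun h 0
      simp [h2, h0] at this
    · rw [disc] at hs
      simp [formEval, Fin.sum_univ_succ]
      linear_combination D 0 * hs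

/-- A quadratic form vanishing at the roots of a nondegenerate quadratic form is
proportional to it. -/
theorem cross_eq_of_roots_subset {K : Type*} [Field K] [IsAlgClosed K] (h2 : (2 : K) ≠ 0)
    {D E : Fin 3 → K} (hD : disc D ≠ 0)
    (h : ∀ l : Fin 2 → K, l ≠ 0 → formEval D (l 1) (-l 0) = 0 → formEval E (l 1) (-l 0) = 0) :
    ∀ i j, E i * D j = E j * D i := by
  obtain ⟨l, hl, hlD⟩ := exists_root_of_quadratic h2 D
  obtain ⟨m, hm⟩ := exists_eq_formMul_of_formEval_eq_zero (n := 1) hl hlD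
  obtain ⟨n, hn⟩ := exists_eq_formMul_of_formEval_eq_zero (n := 1) hl (h l hl hlD)
  have hDm : D = formMul l m :=
    formPoly_injective (n := 2) (hm.trans (formPoly_formMul l m).symm)
  have hEn : E = formMul l n :=
    formPoly_injective (n := 2) (hn.trans (formPoly_formMul l n).symm)
  rw [hDm, disc_formMul] at hD
  have hm0 : m ≠ 0 := by rintro rfl; simp at hD
  have hmD : formEval D (m 1) (-m 0) = 0 := by
    rw [hDm]
    exact (formEval_formMul l m _ _).trans (by rw [formEval_root m, mul_zero])
  have hmE := h m hm0 hmD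
  have hmn : formEval n (m 1) (-m 0) = 0 := by
    rw [hEn] at hmE
    have := (formEval_formMul l n (m 1) (-m 0)).symm.trans hmE
    rw [formEval_root'] at this
    refine (mul_eq_zero.mp this).resolve_left fun h0 => hD ?_
    rw [h0]; simp
  rw [formEval_root'] at hmn
  obtain ⟨c, rfl⟩ := exists_smul_of_cross_eq (l := m) (m := n) hm0 (by linear_combination -hmn)
  have hED : ∀ i, E i = c * D i := fun i => by
    rw [hEn, hDm]
    simp only [formMul, Finset.mul_sum, Pi.smul_apply, smul_eq_mul]
    refine Finset.sum_congr rfl fun q _ => ?_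
    split_ifs <;> ring
  intro i j
  rw [hED, hED]; ring

theorem exists_smul_of_forall_cross_eq {k : Type*} [Field k] {n : ℕ} {D E : Fin n → k}
    (hD : D ≠ 0) (h : ∀ i j, E i * D j = E j * D i) : ∃ c : k, E = c • D := by
  obtain ⟨j, hj⟩ := Function.ne_iff.mp hD
  refine ⟨E j / D j, funext fun i => ?_⟩
  have := h i j
  simp only [Pi.zero_apply, ne_eq] at hj
  simp only [Pi.smul_apply, smul_eq_mul]
  field_simp
  linear_combination this

/-- Descent of proportionality from an algebraic closure. -/
theorem exists_smul_of_roots_subset {k : Type*} [Field k] (h2 : (2 : k) ≠ 0)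
    {D E : Fin 3 → k} (hD : disc D ≠ 0)
    (h : ∀ l : Fin 2 → AlgebraicClosure k, l ≠ 0 →
      formEval (n := 2) (fun i => algebraMap k (AlgebraicClosure k) (D i)) (l 1) (-l 0) = 0 →
      formEval (n := 2) (fun i => algebraMap k (AlgebraicClosure k) (E i)) (l 1) (-l 0) = 0) :
    ∃ c : k, E = c • D := by
  refine exists_smul_of_forall_cross_eq (ne_zero_of_disc_ne_zero hD) fun i j => ?_
  have h2' : (2 : AlgebraicClosure k) ≠ 0 := by
    rw [← map_ofNat (algebraMap k (AlgebraicClosure k)) 2]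
    exact (map_ne_zero _).mpr h2
  refine (algebraMap k (AlgebraicClosure k)).injective ?_
  rw [map_mul, map_mul]
  refine cross_eq_of_roots_subset h2' ?_ h i j
  have : disc (fun i => algebraMap k (AlgebraicClosure k) (D i)) =
      algebraMap k (AlgebraicClosure k) (disc D) := by simp [disc, map_ofNat]
  rw [this]
  exact (map_ne_zero _).mpr hD
theorem exists_formMul_eq_of_isSquare_disc {k : Type*} [Field k] (h2 : (2 : k) ≠ 0)
    {D : Fin 3 → k} (hs : IsSquare (disc D)) : ∃ l m : Fin 2 → k, D = formMul l m := by
  obtain ⟨s, hs⟩ := hs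
  rw [disc] at hs
  by_cases h0 : D 0 = 0
  · refine ⟨![0, 1], ![D 1, D 2], ?_⟩
    ext i
    fin_cases i <;> simp [formMul, Fintype.sum_prod_type, Fin.sum_univ_succ, h0]
  · refine ⟨![2 * D 0, D 1 - s], ![1 / 2, (D 1 + s) / (4 * D 0)], ?_⟩
    have h4 : (4 : k) ≠ 0 := by
      rw [show (4 : k) = 2 * 2 by norm_num]
      exact mul_ne_zero h2 h2
    ext i
    fin_cases i <;> simp [formMul, Fintype.sum_prod_type, Fin.sum_univ_succ] <;> field_simp
    · ring
    · linear_combination -hs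

theorem formMul_zero {k : Type*} [CommRing k] {a b : ℕ} (f : Fin (a + 1) → k) :
    formMul f (0 : Fin (b + 1) → k) = 0 := by
  funext i
  simp [formMul]

theorem formMul_smul_left {k : Type*} [CommRing k] {a b : ℕ} (c : k) (f : Fin (a + 1) → k)
    (g : Fin (b + 1) → k) : formMul (c • f) g = c • formMul f g := by
  funext i
  simp only [formMul, Pi.smul_apply, smul_eq_mul, Finset.mul_sum]
  exact Finset.sum_congr rfl fun q _ => by split_ifs <;> ring

theorem formMul_smul_right {k : Type*} [CommRing k] {a b : ℕ} (c : k) (f : Fin (a + 1) → k)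
    (g : Fin (b + 1) → k) : formMul f (c • g) = c • formMul f g := by
  funext i
  simp only [formMul, Pi.smul_apply, smul_eq_mul, Finset.mul_sum]
  exact Finset.sum_congr rfl fun q _ => by split_ifs <;> ring

theorem formMul_add_right {k : Type*} [CommRing k] {a b : ℕ} (f : Fin (a + 1) → k)
    (g h : Fin (b + 1) → k) : formMul f (g + h) = formMul f g + formMul f h := by
  funext i
  simp only [formMul, Pi.add_apply, ← Finset.sum_add_distrib]
  exact Finset.sum_congr rfl fun q _ => by split_ifs <;> ring

theorem disc_smul {k : Type*} [CommRing k] (c : k) (D : Fin 3 → k) :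
    disc (c • D) = c ^ 2 * disc D := by
  simp only [disc, Pi.smul_apply, smul_eq_mul]; ring

/-- The nonzero linear form `l` satisfies `l² ∣ v`. -/
def LinearSqDvd {k : Type*} [CommRing k] (l : Fin 2 → k) (v : Fin 6 → k) : Prop :=
  l ≠ 0 ∧ ∃ c : Fin 4 → k, v = formMul (formMul l l) c

/-- The quadratic form `D` satisfies `D² ∣ v`. -/
def QuadraticSqDvd {k : Type*} [CommRing k] (D : Fin 3 → k) (v : Fin 6 → k) : Prop :=
  ∃ m : Fin 2 → k, v = formMul (formMul D D) m

theorem LinearSqDvd.smul {k : Type*} [Field k] {l : Fin 2 → k} {v : Fin 6 → k}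
    (h : LinearSqDvd l v) {c : k} (hc : c ≠ 0) : LinearSqDvd (c • l) v := by
  obtain ⟨hl, d, rfl⟩ := h
  refine ⟨smul_ne_zero hc hl, (c * c)⁻¹ • d, ?_⟩
  simp only [formMul_smul_right, formMul_smul_left, smul_smul]
  rw [inv_mul_cancel₀ (mul_ne_zero hc hc), one_smul]

theorem QuadraticSqDvd.smul {k : Type*} [Field k] {D : Fin 3 → k} {v : Fin 6 → k}
    (h : QuadraticSqDvd D v) {c : k} (hc : c ≠ 0) : QuadraticSqDvd (c • D) v := by
  obtain ⟨d, rfl⟩ := h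
  refine ⟨(c * c)⁻¹ • d, ?_⟩
  simp only [formMul_smul_right, formMul_smul_left, smul_smul]
  rw [inv_mul_cancel₀ (mul_ne_zero hc hc), one_smul]

theorem QuadraticSqDvd.linearSqDvd {k : Type*} [Field k] {D : Fin 3 → k} {v : Fin 6 → k}
    (h : QuadraticSqDvd D v) {l : Fin 2 → k} (hl : l ≠ 0)
    (hr : formEval D (l 1) (-l 0) = 0) : LinearSqDvd l v := by
  obtain ⟨m, rfl⟩ := h
  obtain ⟨n, hn⟩ := exists_eq_formMul_of_formEval_eq_zero (n := 1) hl hr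
  refine ⟨hl, formMul (formMul n n) m, ?_⟩
  refine formPoly_injective (n := 5) ?_
  have e : formPoly (formMul (formMul n n) m : Fin 4 → k) = formPoly n ^ 2 * formPoly m :=
    formPoly_formMul_self n m
  refine ((formPoly_formMul_self D m).trans ?_).trans
    (formPoly_formMul_self l (formMul (formMul n n) m : Fin 4 → k)).symm
  rw [e, hn]; ring

theorem LinearSqDvd.formEval_eq_zero {k : Type*} [Field k] {D : Fin 3 → k} {l : Fin 2 → k}
    {v : Fin 6 → k} (hl : LinearSqDvd l v) (hD : QuadraticSqDvd D v) (hv : v ≠ 0) :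
    formEval D (l 1) (-l 0) = 0 := by
  obtain ⟨hl0, c, hc⟩ := hl
  obtain ⟨m, hm⟩ := hD
  refine formEval_eq_zero_of_sq_dvd hl0 ?_ (hc.symm.trans hm)
  rintro rfl
  exact hv (hm.trans (formMul_zero _))

theorem QuadraticSqDvd.map {k K : Type*} [Field k] [Field K] (φ : k →+* K) {D : Fin 3 → k}
    {v : Fin 6 → k} (h : QuadraticSqDvd D v) :
    QuadraticSqDvd (fun i => φ (D i)) (fun i => φ (v i)) := by
  obtain ⟨m, rfl⟩ := h
  refine ⟨fun i => φ (m i), ?_⟩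
  refine (map_formMul φ (formMul D D) m).trans ?_
  rw [map_formMul φ D D]

theorem map_ne_zero_of_ne_zero {k K : Type*} [Field k] [Field K] (φ : k →+* K) {n : ℕ}
    {v : Fin n → k} (hv : v ≠ 0) : (fun i => φ (v i)) ≠ 0 := fun h =>
  hv (funext fun i => (map_eq_zero φ).mp (congrFun h i))

/-- Nondegenerate quadratic forms with square dividing a nonzero quintic are proportional. -/
theorem QuadraticSqDvd.exists_smul {k : Type*} [Field k] (h2 : (2 : k) ≠ 0)
    {D E : Fin 3 → k} {v : Fin 6 → k} (hD : disc D ≠ 0) (hDv : QuadraticSqDvd D v)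
    (hEv : QuadraticSqDvd E v) (hv : v ≠ 0) : ∃ c : k, E = c • D := by
  refine exists_smul_of_roots_subset h2 hD fun l hl hr => ?_
  exact ((hDv.map (algebraMap k (AlgebraicClosure k))).linearSqDvd hl hr).formEval_eq_zero
    (hEv.map _) (map_ne_zero_of_ne_zero _ hv)

theorem QuadraticSqDvd.isSingularQuintic {k : Type*} [Field k] (h2 : (2 : k) ≠ 0)
    {D : Fin 3 → k} {v : Fin 6 → k} (h : QuadraticSqDvd D v) (hv : v ≠ 0) :
    IsSingularQuintic v := by
  have h2' : (2 : AlgebraicClosure k) ≠ 0 := by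
    rw [← map_ofNat (algebraMap k (AlgebraicClosure k)) 2]
    exact (map_ne_zero _).mpr h2
  obtain ⟨l, hl, hr⟩ := exists_root_of_quadratic h2'
    (fun i => algebraMap k (AlgebraicClosure k) (D i))
  obtain ⟨_, c, hc⟩ := (h.map (algebraMap k (AlgebraicClosure k))).linearSqDvd hl hr
  exact ⟨hv, l, c, hl, hc⟩

theorem LinearSqDvd.isSingularQuintic {k : Type*} [Field k] {l : Fin 2 → k} {v : Fin 6 → k}
    (h : LinearSqDvd l v) (hv : v ≠ 0) : IsSingularQuintic v := by
  obtain ⟨hl, c, rfl⟩ := h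
  refine ⟨hv, fun i => algebraMap k _ (l i), fun i => algebraMap k _ (c i),
    map_ne_zero_of_ne_zero _ hl, ?_⟩
  refine (map_formMul (algebraMap k (AlgebraicClosure k)) (formMul l l) c).trans ?_
  rw [map_formMul _ l l]

/-- Over a perfect field a singular quintic is divisible by the square of a rational linear
form or of a rational nondegenerate quadratic form. -/
theorem IsSingularQuintic.exists_sqDvd {k : Type*} [Field k] [PerfectField k] {v : Fin 6 → k}
    (h : IsSingularQuintic v) :
    (∃ l, LinearSqDvd l v) ∨ ∃ D, disc D ≠ 0 ∧ QuadraticSqDvd D v := by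
  obtain ⟨hv, l, c, hl, hc⟩ := h
  by_cases h1 : l 1 = 0
  · left
    have hz : ∀ i : Fin 6, 4 ≤ (i : ℕ) → v i = 0 := by
      intro i hi
      refine (map_eq_zero (algebraMap k (AlgebraicClosure k))).mp ?_
      refine (congrFun hc i).trans ?_
      fin_cases i <;> simp at hi <;>
        simp [formMul, Fintype.sum_prod_type, Fin.sum_univ_succ, h1]
    refine ⟨![1, 0], fun h => by simpa using congrFun h 0, ![v 0, v 1, v 2, v 3], ?_⟩
    have h4 := hz 4 (by decide)
    have h5 := hz 5 (by decide)
    ext i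
    fin_cases i <;> simp [formMul, Fintype.sum_prod_type, Fin.sum_univ_succ, h4, h5]
  · have hvp : (formPoly (n := 5) v).map (algebraMap k (AlgebraicClosure k)) =
        formPoly l ^ 2 * formPoly c := by
      refine Eq.trans ?_ ((congrArg (formPoly (n := 5)) hc).trans (formPoly_formMul_self l c))
      simp [formPoly, formEval, Polynomial.map_sum]
    set α : AlgebraicClosure k := -l 0 / l 1 with hα
    have hlα : Polynomial.eval α (formPoly l) = 0 := by
      simp [formPoly, formEval, Fin.sum_univ_succ, hα]
      field_simp
      ring
    have hint : IsIntegral k α := Algebra.IsIntegral.isIntegral α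
    have hroot : Polynomial.aeval α (formPoly (n := 5) v) = 0 := by
      rw [Polynomial.aeval_def, ← Polynomial.eval_map, hvp]
      simp [hlα]
    have hroot' : Polynomial.aeval α (Polynomial.derivative (formPoly (n := 5) v)) = 0 := by
      rw [Polynomial.aeval_def, ← Polynomial.eval_map, ← Polynomial.derivative_map, hvp]
      simp [hlα, sq]
    obtain ⟨u, hu⟩ := minpoly.dvd k α hroot
    have hsep : Polynomial.aeval α (Polynomial.derivative (minpoly k α)) ≠ 0 :=
      (PerfectField.separable_of_irreducible (minpoly.irreducible hint)).aeval_derivative_ne_zero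
        (minpoly.aeval k α)
    have hu0 : Polynomial.aeval α u = 0 := by
      rw [hu, Polynomial.derivative_mul] at hroot'
      simpa [hsep] using hroot'
    obtain ⟨t, rfl⟩ := minpoly.dvd k α hu0
    have hvp0 : formPoly (n := 5) v ≠ 0 := formPoly_ne_zero hv
    have hdeg := formPoly_natDegree_le (n := 5) v
    have hM0 := minpoly.ne_zero hint
    have ht0 : t ≠ 0 := by
      rintro rfl
      simp [hu] at hvp0
    have hpos := minpoly.natDegree_pos hint
    rw [hu, Polynomial.natDegree_mul hM0 (mul_ne_zero hM0 ht0),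
      Polynomial.natDegree_mul hM0 ht0] at hdeg
    have hmonic := minpoly.monic hint
    have hcases : (minpoly k α).natDegree = 1 ∨ (minpoly k α).natDegree = 2 := by omega
    rcases hcases with hd | hd
    · left
      refine ⟨fun i => (minpoly k α).coeff i, fun h => ?_, fun i => t.coeff i, ?_⟩
      · have h' := hmonic.coeff_natDegree
        rw [hd] at h'
        exact one_ne_zero (h'.symm.trans (congrFun h 1))
      · refine formPoly_injective (n := 5) ?_
        refine Eq.trans ?_ (formPoly_formMul_self (a := 1) (b := 3)
          (fun i => (minpoly k α).coeff i) (fun i => t.coeff i)).symm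
        rw [formPoly_of_natDegree_le hd.le, formPoly_of_natDegree_le (by omega), hu]
        ring
    · right
      have hMp := formPoly_of_natDegree_le hd.le
      refine ⟨fun i => (minpoly k α).coeff i, fun h => hsep ?_, fun i => t.coeff i, ?_⟩
      · have hM2 : (minpoly k α).coeff 2 = 1 := by rw [← hd]; exact hmonic.coeff_natDegree
        have hα0 := minpoly.aeval k α
        rw [← hMp] at hα0 ⊢
        rw [disc] at h
        have h' := congrArg (algebraMap k (AlgebraicClosure k)) h
        simp [hM2, formPoly, formEval, Fin.sum_univ_succ, map_ofNat] at h' hα0 ⊢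
        refine pow_eq_zero_iff (two_ne_zero) |>.mp ?_
        linear_combination h' + 4 * hα0
      · refine formPoly_injective (n := 5) ?_
        refine Eq.trans ?_ (formPoly_formMul_self (a := 2) (b := 1)
          (fun i => (minpoly k α).coeff i) (fun i => t.coeff i)).symm
        rw [hMp, formPoly_of_natDegree_le (by omega), hu]
        ring
theorem forall_pair_formMul_eq_zero_of_coeff {k : Type*} [CommRing k] {w : Fin 6 → k}
    {l : Fin 2 → k} (h₀ : l 0 * w 0 + l 1 * w 1 = 0) (h₁ : l 0 * w 1 + l 1 * w 2 = 0)
    (h₂ : l 0 * w 2 + l 1 * w 3 = 0) (h₃ : l 0 * w 3 + l 1 * w 4 = 0)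
    (h₄ : l 0 * w 4 + l 1 * w 5 = 0) (h : Fin 4 → k) :
    pair w (formMul (formMul l l) h) = 0 := by
  simp [pair, formMul, Fintype.sum_prod_type, Fin.sum_univ_succ]
  linear_combination (l 0 * h 0) * h₀ + (l 1 * h 0 + l 0 * h 1) * h₁ +
    (l 1 * h 1 + l 0 * h 2) * h₂ + (l 1 * h 2 + l 0 * h 3) * h₃ + (l 1 * h 3) * h₄

/-- If `q` and `D²` are apolar to a quintic `w` to which no square of a linear form is
apolar, then `q` divides `D²`. -/
theorem exists_sq_eq_formMul_of_apolar {k : Type*} [Field k] {w : Fin 6 → k}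
    (h1 : ¬ ∃ l : Fin 2 → k, l ≠ 0 ∧
      ∀ h : Fin 4 → k, pair w (formMul (formMul l l) h) = 0)
    {q D : Fin 3 → k} (hq : disc q ≠ 0)
    (hap : ∀ h : Fin 4 → k, pair w (formMul q h) = 0)
    (hD : ∀ m : Fin 2 → k, pair w (formMul (formMul D D) m) = 0) :
    ∃ s : Fin 3 → k, formMul D D = formMul q s := by
  have hlin : ∀ l : Fin 2 → k, l 0 * w 0 + l 1 * w 1 = 0 → l 0 * w 1 + l 1 * w 2 = 0 →
      l 0 * w 2 + l 1 * w 3 = 0 → l 0 * w 3 + l 1 * w 4 = 0 → l 0 * w 4 + l 1 * w 5 = 0 →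
      l = 0 := fun l e₀ e₁ e₂ e₃ e₄ => by
    by_contra hl
    exact h1 ⟨l, hl, forall_pair_formMul_eq_zero_of_coeff e₀ e₁ e₂ e₃ e₄⟩
  have a₀ : q 0 * w 0 + q 1 * w 1 + q 2 * w 2 = 0 := by
    have := hap ![1, 0, 0, 0]
    simp [pair, formMul, Fintype.sum_prod_type, Fin.sum_univ_succ] at this
    linear_combination this
  have a₁ : q 0 * w 1 + q 1 * w 2 + q 2 * w 3 = 0 := by
    have := hap ![0, 1, 0, 0]
    simp [pair, formMul, Fintype.sum_prod_type, Fin.sum_univ_succ] at this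
    linear_combination this
  have a₂ : q 0 * w 2 + q 1 * w 3 + q 2 * w 4 = 0 := by
    have := hap ![0, 0, 1, 0]
    simp [pair, formMul, Fintype.sum_prod_type, Fin.sum_univ_succ] at this
    linear_combination this
  have a₃ : q 0 * w 3 + q 1 * w 4 + q 2 * w 5 = 0 := by
    have := hap ![0, 0, 0, 1]
    simp [pair, formMul, Fintype.sum_prod_type, Fin.sum_univ_succ] at this
    linear_combination this
  obtain ⟨b₀, b₁⟩ : D 0 ^ 2 * w 0 + 2 * D 0 * D 1 * w 1 + (D 1 ^ 2 + 2 * D 0 * D 2) * w 2 +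
        2 * D 1 * D 2 * w 3 + D 2 ^ 2 * w 4 = 0 ∧
      D 0 ^ 2 * w 1 + 2 * D 0 * D 1 * w 2 + (D 1 ^ 2 + 2 * D 0 * D 2) * w 3 +
        2 * D 1 * D 2 * w 4 + D 2 ^ 2 * w 5 = 0 := by
    have e₀ := hD ![1, 0]
    have e₁ := hD ![0, 1]
    simp [pair, formMul, Fintype.sum_prod_type, Fin.sum_univ_succ] at e₀ e₁
    exact ⟨by linear_combination e₀, by linear_combination e₁⟩
  by_cases h2 : q 2 = 0
  · by_cases h0 : q 0 = 0
    · have hq1 : q 1 ≠ 0 := by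
        intro h
        simp [disc, h0, h] at hq
      simp only [h0, h2, zero_mul, zero_add, add_zero, mul_eq_zero, hq1, false_or] at a₀ a₁ a₂ a₃
      simp only [a₀, a₁, a₂, a₃, mul_zero, add_zero, zero_add, mul_eq_zero] at b₀ b₁
      have hw0 : w 0 ≠ 0 := fun h => by
        simpa using congrFun (hlin ![1, 0] (by simp [h]) (by simp [a₀]) (by simp [a₁])
          (by simp [a₂]) (by simp [a₃])) 0
      have hw5 : w 5 ≠ 0 := fun h => by
        simpa using congrFun (hlin ![0, 1] (by simp [a₀]) (by simp [a₁]) (by simp [a₂])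
          (by simp [a₃]) (by simp [h])) 1
      have hD0 : D 0 = 0 := by simpa [hw0] using b₀
      have hD2 : D 2 = 0 := by simpa [hw5] using b₁
      refine ⟨![0, D 1 ^ 2 / q 1, 0], ?_⟩
      ext i
      fin_cases i <;>
        simp [formMul, Fintype.sum_prod_type, Fin.sum_univ_succ, h0, h2, hD0, hD2]
      field_simp
    · set s₀ := D 0 ^ 2 / q 0 with hs₀
      set s₁ := (2 * D 0 * D 1 - q 1 * s₀) / q 0 with hs₁
      set s₂ := (D 1 ^ 2 + 2 * D 0 * D 2 - q 1 * s₁ - q 2 * s₀) / q 0 with hs₂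
      have e₀ : q 0 * s₀ = D 0 ^ 2 := by rw [hs₀]; field_simp
      have e₁ : q 0 * s₁ = 2 * D 0 * D 1 - q 1 * s₀ := by rw [hs₁]; field_simp
      have e₂ : q 0 * s₂ = D 1 ^ 2 + 2 * D 0 * D 2 - q 1 * s₁ - q 2 * s₀ := by
        rw [hs₂]; field_simp
      clear_value s₀ s₁ s₂
      have c₃ : (2 * D 1 * D 2 - q 1 * s₂ - q 2 * s₁) * w 3 +
          (D 2 ^ 2 - q 2 * s₂) * w 4 = 0 := by
        linear_combination b₀ - s₀ * a₀ - s₁ * a₁ - s₂ * a₂ + w 0 * e₀ + w 1 * e₁ + w 2 * e₂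
      have c₄ : (2 * D 1 * D 2 - q 1 * s₂ - q 2 * s₁) * w 4 +
          (D 2 ^ 2 - q 2 * s₂) * w 5 = 0 := by
        linear_combination b₁ - s₀ * a₁ - s₁ * a₂ - s₂ * a₃ + w 1 * e₀ + w 2 * e₁ + w 3 * e₂
      generalize hr₀ : 2 * D 1 * D 2 - q 1 * s₂ - q 2 * s₁ = r₀ at c₃ c₄
      generalize hr₁ : D 2 ^ 2 - q 2 * s₂ = r₁ at c₃ c₄
      have c₂ : r₀ * w 2 + r₁ * w 3 = 0 := by
        refine (mul_eq_zero.mp (?_ : q 0 * _ = 0)).resolve_left h0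
        linear_combination r₀ * a₂ + r₁ * a₃ - q 1 * c₃ - q 2 * c₄
      have c₁ : r₀ * w 1 + r₁ * w 2 = 0 := by
        refine (mul_eq_zero.mp (?_ : q 0 * _ = 0)).resolve_left h0
        linear_combination r₀ * a₁ + r₁ * a₂ - q 1 * c₂ - q 2 * c₃
      have c₀ : r₀ * w 0 + r₁ * w 1 = 0 := by
        refine (mul_eq_zero.mp (?_ : q 0 * _ = 0)).resolve_left h0
        linear_combination r₀ * a₀ + r₁ * a₁ - q 1 * c₁ - q 2 * c₂
      have hr := hlin ![r₀, r₁] c₀ c₁ c₂ c₃ c₄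
      have z₀ : r₀ = 0 := congrFun hr 0
      have z₁ : r₁ = 0 := congrFun hr 1
      rw [z₀] at hr₀
      rw [z₁] at hr₁
      refine ⟨![s₀, s₁, s₂], ?_⟩
      ext i
      fin_cases i <;> simp [formMul, Fintype.sum_prod_type, Fin.sum_univ_succ]
      · linear_combination -e₀
      · linear_combination -e₁
      · linear_combination -e₂
      · linear_combination hr₀
      · linear_combination hr₁
  · set s₂ := D 2 ^ 2 / q 2 with hs₂
    set s₁ := (2 * D 1 * D 2 - q 1 * s₂) / q 2 with hs₁
    set s₀ := (D 1 ^ 2 + 2 * D 0 * D 2 - q 1 * s₁ - q 0 * s₂) / q 2 with hs₀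
    have e₂ : q 2 * s₂ = D 2 ^ 2 := by rw [hs₂]; field_simp
    have e₁ : q 2 * s₁ = 2 * D 1 * D 2 - q 1 * s₂ := by rw [hs₁]; field_simp
    have e₀ : q 2 * s₀ = D 1 ^ 2 + 2 * D 0 * D 2 - q 1 * s₁ - q 0 * s₂ := by
      rw [hs₀]; field_simp
    clear_value s₀ s₁ s₂
    have c₀ : (D 0 ^ 2 - q 0 * s₀) * w 0 +
        (2 * D 0 * D 1 - q 1 * s₀ - q 0 * s₁) * w 1 = 0 := by
      linear_combination b₀ - s₀ * a₀ - s₁ * a₁ - s₂ * a₂ + w 4 * e₂ + w 3 * e₁ + w 2 * e₀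
    have c₁ : (D 0 ^ 2 - q 0 * s₀) * w 1 +
        (2 * D 0 * D 1 - q 1 * s₀ - q 0 * s₁) * w 2 = 0 := by
      linear_combination b₁ - s₀ * a₁ - s₁ * a₂ - s₂ * a₃ + w 5 * e₂ + w 4 * e₁ + w 3 * e₀
    generalize hr₁ : 2 * D 0 * D 1 - q 1 * s₀ - q 0 * s₁ = r₁ at c₀ c₁
    generalize hr₀ : D 0 ^ 2 - q 0 * s₀ = r₀ at c₀ c₁
    have c₂ : r₀ * w 2 + r₁ * w 3 = 0 := by
      refine (mul_eq_zero.mp (?_ : q 2 * _ = 0)).resolve_left h2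
      linear_combination r₀ * a₀ + r₁ * a₁ - q 1 * c₁ - q 0 * c₀
    have c₃ : r₀ * w 3 + r₁ * w 4 = 0 := by
      refine (mul_eq_zero.mp (?_ : q 2 * _ = 0)).resolve_left h2
      linear_combination r₀ * a₁ + r₁ * a₂ - q 1 * c₂ - q 0 * c₁
    have c₄ : r₀ * w 4 + r₁ * w 5 = 0 := by
      refine (mul_eq_zero.mp (?_ : q 2 * _ = 0)).resolve_left h2
      linear_combination r₀ * a₂ + r₁ * a₃ - q 1 * c₃ - q 0 * c₂
    have hr := hlin ![r₀, r₁] c₀ c₁ c₂ c₃ c₄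
    have z₀ : r₀ = 0 := congrFun hr 0
    have z₁ : r₁ = 0 := congrFun hr 1
    rw [z₀] at hr₀
    rw [z₁] at hr₁
    refine ⟨![s₀, s₁, s₂], ?_⟩
    ext i
    fin_cases i <;> simp [formMul, Fintype.sum_prod_type, Fin.sum_univ_succ]
    · linear_combination hr₀
    · linear_combination hr₁
    · linear_combination -e₀
    · linear_combination -e₁
    · linear_combination -e₂

theorem exists_smul_of_sq_apolar {k : Type*} [Field k] (h2 : (2 : k) ≠ 0) {w : Fin 6 → k}
    (h1 : ¬ ∃ l : Fin 2 → k, l ≠ 0 ∧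
      ∀ h : Fin 4 → k, pair w (formMul (formMul l l) h) = 0)
    {q D : Fin 3 → k} (hq : disc q ≠ 0)
    (hap : ∀ h : Fin 4 → k, pair w (formMul q h) = 0)
    (hD : ∀ m : Fin 2 → k, pair w (formMul (formMul D D) m) = 0) :
    ∃ c : k, D = c • q := by
  obtain ⟨s, hs⟩ := exists_sq_eq_formMul_of_apolar h1 hq hap hD
  refine exists_smul_of_roots_subset h2 hq fun l hl hr => ?_
  have hs' := congrArg (fun v : Fin 5 → k =>
    fun i => algebraMap k (AlgebraicClosure k) (v i)) hs
  have hs'' := ((map_formMul (algebraMap k (AlgebraicClosure k)) D D).symm.trans hs').trans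
    (map_formMul _ q s)
  have he := congrArg (fun v : Fin 5 → AlgebraicClosure k => formEval v (l 1) (-l 0)) hs''
  have he' := ((formEval_formMul (a := 2) (b := 2) _ _ (l 1) (-l 0)).symm.trans he).trans
    (formEval_formMul (a := 2) (b := 2) _ _ (l 1) (-l 0))
  rw [hr, zero_mul] at he'
  exact mul_self_eq_zero.mp he'

theorem sq_apolar_of_apolar {k : Type*} [CommRing k] {w : Fin 6 → k} {q : Fin 3 → k}
    (hap : ∀ h : Fin 4 → k, pair w (formMul q h) = 0) (m : Fin 2 → k) :
    pair w (formMul (formMul q q) m) = 0 := by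
  rw [← hap (formMul q m)]
  refine congrArg (pair w) (formPoly_injective (n := 5) ?_)
  refine (formPoly_formMul_self q m).trans (Eq.symm ((formPoly_formMul q _).trans ?_))
  refine (congrArg _ (formPoly_formMul q m)).trans ?_
  ring

theorem pair_add {k : Type*} [CommRing k] {n : ℕ} (w u v : Fin (n + 1) → k) :
    pair w (u + v) = pair w u + pair w v := by
  simp [pair, mul_add, Finset.sum_add_distrib]

theorem pair_smul {k : Type*} [CommRing k] {n : ℕ} (c : k) (w v : Fin (n + 1) → k) :
    pair w (c • v) = c * pair w v := by
  simp only [pair, Pi.smul_apply, smul_eq_mul, Finset.mul_sum]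
  exact Finset.sum_congr rfl fun i _ => by ring

theorem pair_zero {k : Type*} [CommRing k] {n : ℕ} (w : Fin (n + 1) → k) :
    pair w 0 = 0 := by
  simp [pair]

open scoped Classical in
/-- The exponential sum over the multiples of a fixed nonzero form. -/
theorem sum_stdAddChar_multiples (p : ℕ) [Fact p.Prime] {a b : ℕ} {f : Fin (a + 1) → ZMod p}
    (hf : f ≠ 0) (w : Fin (a + b + 1) → ZMod p) :
    (∑ v : Fin (a + b + 1) → ZMod p, if ∃ c : Fin (b + 1) → ZMod p, v = formMul f c then
      ZMod.stdAddChar (N := p) (pair w v) else 0) =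
    if ∀ c : Fin (b + 1) → ZMod p, pair w (formMul f c) = 0 then (p : ℂ) ^ (b + 1) else 0 := by
  let φ : (Fin (b + 1) → ZMod p) →+ ZMod p :=
    { toFun := fun c => pair w (formMul f c)
      map_zero' := by rw [formMul_zero, pair_zero]
      map_add' := fun c d => by rw [formMul_add_right, pair_add] }
  have hsum : (∑ v : Fin (a + b + 1) → ZMod p,
      if ∃ c : Fin (b + 1) → ZMod p, v = formMul f c then
        ZMod.stdAddChar (N := p) (pair w v) else 0) =
      ∑ c, (ZMod.stdAddChar (N := p)).compAddMonoidHom φ c := by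
    rw [← Finset.sum_filter]
    refine (Finset.sum_bij (fun c _ => formMul f c) ?_ ?_ ?_ ?_).symm
    · intro c _
      simp
    · intro c _ d _ h
      exact formMul_left_injective hf h
    · intro v hv
      obtain ⟨c, hc⟩ := (Finset.mem_filter.mp hv).2
      exact ⟨c, Finset.mem_univ _, hc.symm⟩
    · intro c _
      rfl
  rw [hsum, AddChar.sum_eq_ite]
  have hiff : (ZMod.stdAddChar (N := p)).compAddMonoidHom φ = 0 ↔
      ∀ c : Fin (b + 1) → ZMod p, pair w (formMul f c) = 0 := by
    rw [DFunLike.ext_iff]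
    refine forall_congr' fun c => ?_
    rw [AddChar.compAddMonoidHom_apply, AddChar.zero_apply,
      ← AddChar.map_zero_eq_one (ZMod.stdAddChar (N := p)), ZMod.injective_stdAddChar.eq_iff]
    rfl
  simp only [hiff]
  simp [ZMod.card]
theorem sum_ite_exists_smul {k : Type*} [Field k] [Fintype k] {n : ℕ} {x : Fin n → k}
    [DecidablePred fun y : Fin n → k => ∃ c : k, c ≠ 0 ∧ y = c • x] (hx : x ≠ 0)
    {R : Type*} [CommRing R] (r : R) :
    (∑ y : Fin n → k, if ∃ c : k, c ≠ 0 ∧ y = c • x then r else 0) =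
      ((Fintype.card k : R) - 1) * r := by
  classical
  have hcard : (Finset.univ.filter fun y : Fin n → k => ∃ c : k, c ≠ 0 ∧ y = c • x).card =
      (Finset.univ.erase (0 : k)).card := by
    symm
    refine Finset.card_bij (fun c _ => c • x) ?_ ?_ ?_
    · intro c hc
      exact Finset.mem_filter.mpr ⟨Finset.mem_univ _, c, Finset.ne_of_mem_erase hc, rfl⟩
    · intro c _ d _ h
      exact smul_left_injective k hx h
    · intro y hy
      obtain ⟨c, hc, rfl⟩ := (Finset.mem_filter.mp hy).2
      exact ⟨c, Finset.mem_erase.mpr ⟨hc, Finset.mem_univ _⟩, rfl⟩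
  rw [← Finset.sum_filter, Finset.sum_const, hcard, Finset.card_erase_of_mem (Finset.mem_univ _),
    Finset.card_univ, nsmul_eq_mul, Nat.cast_sub Fintype.card_pos, Nat.cast_one]

open scoped Classical in
/-- A nondegenerate binary quadratic form `D` over a finite field has `1 + χ(Disc D)` roots
on the projective line. -/
theorem sum_ite_root_quadratic {k : Type*} [Field k] [Fintype k] [DecidableEq k] (h2 : (2 : k) ≠ 0)
    {D : Fin 3 → k} (hD : disc D ≠ 0) :
    (∑ l : Fin 2 → k, if l ≠ 0 ∧ formEval D (l 1) (-l 0) = 0 then (1 : ℤ) else 0) =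
      ((Fintype.card k : ℤ) - 1) * (1 + quadraticChar k (disc D)) := by
  by_cases hs : IsSquare (disc D)
  · obtain ⟨a, b, rfl⟩ := exists_formMul_eq_of_isSquare_disc h2 hs
    rw [(quadraticChar_one_iff_isSquare hD).mpr hs]
    rw [disc_formMul] at hD
    have ha : a ≠ 0 := by rintro rfl; simp at hD
    have hb : b ≠ 0 := by rintro rfl; simp at hD
    have hterm : ∀ l : Fin 2 → k,
        (if l ≠ 0 ∧ formEval (n := 2) (formMul a b) (l 1) (-l 0) = 0 then (1 : ℤ) else 0) =
        (if ∃ c : k, c ≠ 0 ∧ l = c • a then 1 else 0) +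
          if ∃ c : k, c ≠ 0 ∧ l = c • b then 1 else 0 := by
      intro l
      have hev : formEval (n := 2) (formMul a b) (l 1) (-l 0) =
          (a 0 * l 1 - a 1 * l 0) * (b 0 * l 1 - b 1 * l 0) := by
        refine (formEval_formMul a b _ _).trans ?_
        rw [formEval_root', formEval_root']
      have hmul : ∀ {x : Fin 2 → k}, x ≠ 0 → ((∃ c : k, c ≠ 0 ∧ l = c • x) ↔
          l ≠ 0 ∧ x 0 * l 1 - x 1 * l 0 = 0) := by
        intro x hx
        constructor
        · rintro ⟨c, hc, rfl⟩
          refine ⟨smul_ne_zero hc hx, ?_⟩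
          simp only [Pi.smul_apply, smul_eq_mul]; ring
        · rintro ⟨hl, h⟩
          obtain ⟨c, rfl⟩ := exists_smul_of_cross_eq hx (sub_eq_zero.mp h)
          exact ⟨c, fun hc => hl (by rw [hc, zero_smul]), rfl⟩
      simp only [hmul ha, hmul hb, hev, mul_eq_zero]
      by_cases hl : l = 0
      · simp [hl]
      · by_cases hal : a 0 * l 1 - a 1 * l 0 = 0
        · have hbl : b 0 * l 1 - b 1 * l 0 ≠ 0 := by
            intro hbl
            obtain ⟨c, rfl⟩ := exists_smul_of_cross_eq ha (sub_eq_zero.mp hal)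
            have hc : c ≠ 0 := fun hc => hl (by rw [hc, zero_smul])
            refine hD ?_
            simp only [Pi.smul_apply, smul_eq_mul] at hbl
            have : c * (a 0 * b 1 - a 1 * b 0) = 0 := by linear_combination -hbl
            rw [(mul_eq_zero.mp this).resolve_left hc]; simp
          simp [hl, hal, hbl]
        · simp [hl, hal]
    simp only [hterm]
    rw [Finset.sum_add_distrib, sum_ite_exists_smul ha, sum_ite_exists_smul hb]
    ring
  · rw [quadraticChar_neg_one_iff_not_isSquare.mpr hs, Finset.sum_eq_zero]
    · ring
    · intro l _
      refine if_neg ?_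
      rintro ⟨hl, hr⟩
      obtain ⟨m, hm⟩ := exists_eq_formMul_of_formEval_eq_zero (n := 1) hl hr
      have hDm : D = formMul l m :=
        formPoly_injective (n := 2) (hm.trans (formPoly_formMul l m).symm)
      exact hs ⟨l 0 * m 1 - l 1 * m 0, by rw [hDm, disc_formMul, sq]⟩

theorem sum_quadraticChar_disc {k : Type*} [Field k] [Fintype k] [DecidableEq k]
    (h2 : (2 : k) ≠ 0) :
    ∑ D : Fin 3 → k, quadraticChar k (disc D) =
      (Fintype.card k : ℤ) * ((Fintype.card k : ℤ) - 1) := by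
  have hchar : ringChar k ≠ 2 := fun h => h2 (by
    have := ringChar.Nat.cast_ringChar (R := k)
    rw [h] at this
    exact_mod_cast this)
  let e : k × k × k ≃ (Fin 3 → k) :=
    { toFun := fun t => ![t.1, t.2.1, t.2.2]
      invFun := fun D => (D 0, D 1, D 2)
      left_inv := fun t => rfl
      right_inv := fun D => by ext i; fin_cases i <;> rfl }
  have he : ∀ a b c, disc (e (a, b, c)) = b ^ 2 - 4 * a * c := fun _ _ _ => rfl
  rw [← e.sum_comp, Fintype.sum_prod_type, Finset.sum_eq_single 0]
  · rw [Fintype.sum_prod_type]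
    have : ∀ b : k, (∑ c : k, quadraticChar k (disc (e (0, b, c)))) =
        (Fintype.card k : ℤ) * (if b = 0 then 0 else 1) := by
      intro b
      have hdisc : ∀ c, disc (e (0, b, c)) = b ^ 2 := fun c => by simp [he]
      simp only [hdisc]
      rw [Finset.sum_const, Finset.card_univ, nsmul_eq_mul]
      by_cases hb : b = 0
      · simp [hb]
      · simp [hb, quadraticChar_sq_one' hb]
    simp only [this]
    rw [← Finset.mul_sum]
    congr 1
    have : ∀ b : k, (if b = 0 then (0 : ℤ) else 1) = 1 - if b = 0 then 1 else 0 := fun b => by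
      split_ifs <;> rfl
    simp only [this]
    rw [Finset.sum_sub_distrib]
    simp
  · intro a _ ha
    rw [Fintype.sum_prod_type]
    refine Finset.sum_eq_zero fun b _ => ?_
    have h4 : -(4 * a) ≠ 0 := by
      rw [show (4 : k) = 2 * 2 by norm_num]
      exact neg_ne_zero.mpr (mul_ne_zero (mul_ne_zero h2 h2) ha)
    rw [← quadraticChar_sum_zero hchar]
    refine Fintype.sum_equiv ((Equiv.mulLeft₀ _ h4).trans (Equiv.addLeft (b ^ 2))) _ _ fun c => ?_
    congr 1
    simp [he]
    ring
  · simp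

open scoped Classical in
/-- The Möbius-type identity that detects the quintics divisible by a square. -/
theorem sum_linearSqDvd_sub_sum_quadraticSqDvd {k : Type*} [Field k] [Fintype k]
    [DecidableEq k] (h2 : (2 : k) ≠ 0) (v : Fin 6 → k) :
    (∑ l : Fin 2 → k, if LinearSqDvd l v then (1 : ℤ) else 0) -
      ∑ D : Fin 3 → k, quadraticChar k (disc D) * (if QuadraticSqDvd D v then 1 else 0) =
    if v = 0 ∨ IsSingularQuintic v then (Fintype.card k : ℤ) - 1 else 0 := by
  by_cases hv : v = 0
  · subst hv
    have hl : ∀ l : Fin 2 → k, LinearSqDvd l 0 ↔ ¬ l = 0 := fun l =>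
      ⟨fun h => h.1, fun h => ⟨h, 0, (formMul_zero (b := 3) (formMul l l)).symm⟩⟩
    have hD : ∀ D : Fin 3 → k, QuadraticSqDvd D 0 := fun D =>
      ⟨0, (formMul_zero (b := 1) (formMul D D)).symm⟩
    simp only [hl, hD, if_true, mul_one, true_or]
    rw [sum_quadraticChar_disc h2]
    have : ∀ l : Fin 2 → k, (if ¬ l = 0 then (1 : ℤ) else 0) = 1 - if l = 0 then 1 else 0 :=
      fun l => by split_ifs <;> rfl
    simp only [this]
    rw [Finset.sum_sub_distrib]
    simp
    ring
  by_cases hQ : ∃ D, disc D ≠ 0 ∧ QuadraticSqDvd D v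
  · obtain ⟨D, hD, hDv⟩ := hQ
    have hl : ∀ l : Fin 2 → k, LinearSqDvd l v ↔ l ≠ 0 ∧ formEval D (l 1) (-l 0) = 0 :=
      fun l => ⟨fun h => ⟨h.1, h.formEval_eq_zero hDv hv⟩, fun h => hDv.linearSqDvd h.1 h.2⟩
    have hE : ∀ E : Fin 3 → k,
        quadraticChar k (disc E) * (if QuadraticSqDvd E v then 1 else 0) =
        if ∃ c : k, c ≠ 0 ∧ E = c • D then quadraticChar k (disc D) else 0 := by
      intro E
      by_cases h : ∃ c : k, c ≠ 0 ∧ E = c • D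
      · rw [if_pos h]
        obtain ⟨c, hc, rfl⟩ := h
        rw [if_pos (hDv.smul hc), disc_smul, map_mul, quadraticChar_sq_one' hc, one_mul, mul_one]
      · rw [if_neg h]
        by_cases hE : QuadraticSqDvd E v
        · obtain ⟨c, rfl⟩ := hDv.exists_smul h2 hD hE hv
          have hc : c = 0 := by
            by_contra hc
            exact h ⟨c, hc, rfl⟩
          rw [hc]
          simp [disc]
        · rw [if_neg hE, mul_zero]
    simp only [hl, hE]
    rw [sum_ite_root_quadratic h2 hD, sum_ite_exists_smul (ne_zero_of_disc_ne_zero hD),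
      if_pos (Or.inr (hDv.isSingularQuintic h2 hv))]
    ring
  · have hE : ∀ E : Fin 3 → k,
        quadraticChar k (disc E) * (if QuadraticSqDvd E v then 1 else 0) = 0 := by
      intro E
      by_cases hE : disc E = 0
      · simp [hE]
      · rw [if_neg fun h => hQ ⟨E, hE, h⟩, mul_zero]
    simp only [hE, Finset.sum_const_zero, sub_zero]
    by_cases hL : ∃ l, LinearSqDvd l v
    · obtain ⟨l, hl⟩ := hL
      have hm : ∀ m : Fin 2 → k, LinearSqDvd m v ↔ ∃ c : k, c ≠ 0 ∧ m = c • l := by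
        intro m
        constructor
        · intro hm
          have hcross : l 0 * m 1 - l 1 * m 0 = 0 := by
            by_contra hne
            obtain ⟨_, c₁, hc₁⟩ := hl
            obtain ⟨_, c₂, hc₂⟩ := hm
            obtain ⟨d, hd⟩ := exists_sq_dvd_of_linear_sq_dvd hne (hc₁.symm.trans hc₂)
            refine hQ ⟨formMul l m, ?_, d, hc₁.trans hd⟩
            rw [disc_formMul]
            exact pow_ne_zero _ hne
          obtain ⟨c, rfl⟩ := exists_smul_of_cross_eq hl.1 (sub_eq_zero.mp hcross)
          exact ⟨c, fun hc => hm.1 (by rw [hc, zero_smul]), rfl⟩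
        · rintro ⟨c, hc, rfl⟩
          exact hl.smul hc
      simp only [hm]
      rw [sum_ite_exists_smul hl.1, if_pos (Or.inr (hl.isSingularQuintic hv)), mul_one]
    · rw [if_neg, Finset.sum_eq_zero]
      · exact fun l _ => if_neg fun h => hL ⟨l, h⟩
      · rintro (h | h)
        · exact hv h
        · exact h.exists_sqDvd.elim hL hQ

open scoped Classical in
theorem expSum_eq_sum_stdAddChar (p : ℕ) [Fact p.Prime] (w : Fin 6 → ZMod p) :
    expSum p w = ∑ v : Fin 6 → ZMod p,
      if v = 0 ∨ IsSingularQuintic v then ZMod.stdAddChar (N := p) (pair w v) else 0 := by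
  unfold expSum
  refine Finset.sum_congr rfl fun v _ => ?_
  rw [ZMod.stdAddChar_apply, ZMod.toCircle_apply]

/-- The exponential sum in terms of the nondegenerate quadratic form `q` apolar to `w`. -/
theorem expSum_eq_of_apolar (p : ℕ) [Fact p.Prime] (h2 : (2 : ZMod p) ≠ 0) (w : Fin 6 → ZMod p)
    (h1 : ¬ ∃ l : Fin 2 → ZMod p, l ≠ 0 ∧
      ∀ h : Fin 4 → ZMod p, pair w (formMul (formMul l l) h) = 0)
    (q : Fin 3 → ZMod p) (hap : ∀ h : Fin 4 → ZMod p, pair w (formMul q h) = 0)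
    (hd : disc q ≠ 0) :
    expSum p w = -(quadraticChar (ZMod p) (disc q) : ℂ) * (p : ℂ) ^ 2 := by
  classical
  have hp1 : (p : ℂ) - 1 ≠ 0 := by
    rw [sub_ne_zero]
    exact_mod_cast (Fact.out : p.Prime).one_lt.ne'
  refine mul_left_cancel₀ hp1 ?_
  have hL : ∀ l : Fin 2 → ZMod p, (∑ v : Fin 6 → ZMod p,
      if LinearSqDvd l v then ZMod.stdAddChar (N := p) (pair w v) else 0) = 0 := by
    intro l
    by_cases hl : l = 0
    · exact Finset.sum_eq_zero fun v _ => if_neg fun h => h.1 hl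
    · have := sum_stdAddChar_multiples p (a := 2) (b := 3) (formMul_ne_zero hl hl) w
      rw [if_neg fun h => h1 ⟨l, hl, h⟩] at this
      refine Eq.trans ?_ this
      refine Finset.sum_congr rfl fun v _ => if_congr ⟨fun h => h.2, fun h => ⟨hl, h⟩⟩ rfl rfl
  have hQ : ∀ D : Fin 3 → ZMod p, (quadraticChar (ZMod p) (disc D) : ℂ) *
      (∑ v : Fin 6 → ZMod p,
        if QuadraticSqDvd D v then ZMod.stdAddChar (N := p) (pair w v) else 0) =
      if ∃ c : ZMod p, c ≠ 0 ∧ D = c • q then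
        (quadraticChar (ZMod p) (disc q) : ℂ) * (p : ℂ) ^ 2 else 0 := by
    intro D
    by_cases hD : disc D = 0
    · rw [if_neg]
      · simp [hD]
      · rintro ⟨c, hc, rfl⟩
        rw [disc_smul] at hD
        exact mul_ne_zero (pow_ne_zero _ hc) hd hD
    · have hD0 := ne_zero_of_disc_ne_zero hD
      have hsum := sum_stdAddChar_multiples p (a := 4) (b := 1) (formMul_ne_zero hD0 hD0) w
      have hiff : (∀ c : Fin 2 → ZMod p, pair w (formMul (formMul D D) c) = 0) ↔
          ∃ c : ZMod p, c ≠ 0 ∧ D = c • q := by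
        constructor
        · intro h
          obtain ⟨c, hc⟩ := exists_smul_of_sq_apolar h2 h1 hd hap h
          exact ⟨c, fun h0 => hD0 (by rw [hc, h0, zero_smul]), hc⟩
        · rintro ⟨c, _, rfl⟩
          refine sq_apolar_of_apolar fun h => ?_
          have := pair_smul c w (formMul q h)
          rw [formMul_smul_left]
          exact this.trans (by rw [hap, mul_zero])
      have hsum' : (∑ v : Fin 6 → ZMod p,
          if QuadraticSqDvd D v then ZMod.stdAddChar (N := p) (pair w v) else 0) =
          if ∃ c : ZMod p, c ≠ 0 ∧ D = c • q then (p : ℂ) ^ 2 else 0 := by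
        refine Eq.trans (Finset.sum_congr rfl fun v _ => ?_) (hsum.trans (if_congr hiff rfl rfl))
        exact if_congr Iff.rfl rfl rfl
      rw [hsum']
      by_cases h : ∃ c : ZMod p, c ≠ 0 ∧ D = c • q
      · rw [if_pos h, if_pos h]
        obtain ⟨c, hc, rfl⟩ := h
        rw [disc_smul, map_mul, quadraticChar_sq_one' hc, one_mul]
      · rw [if_neg h, if_neg h, mul_zero]
  calc ((p : ℂ) - 1) * expSum p w
      = ∑ v : Fin 6 → ZMod p, (((∑ l : Fin 2 → ZMod p, if LinearSqDvd l v then (1 : ℤ) else 0) -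
          ∑ D : Fin 3 → ZMod p, quadraticChar (ZMod p) (disc D) *
            (if QuadraticSqDvd D v then 1 else 0) : ℤ) : ℂ) *
          ZMod.stdAddChar (N := p) (pair w v) := by
        rw [expSum_eq_sum_stdAddChar, Finset.mul_sum]
        refine Finset.sum_congr rfl fun v _ => ?_
        have := sum_linearSqDvd_sub_sum_quadraticSqDvd h2 v
        rw [ZMod.card] at this
        rw [this]
        split_ifs <;> simp
    _ = (∑ l : Fin 2 → ZMod p, ∑ v : Fin 6 → ZMod p,
          if LinearSqDvd l v then ZMod.stdAddChar (N := p) (pair w v) else 0) -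
        ∑ D : Fin 3 → ZMod p, (quadraticChar (ZMod p) (disc D) : ℂ) *
          ∑ v : Fin 6 → ZMod p,
            if QuadraticSqDvd D v then ZMod.stdAddChar (N := p) (pair w v) else 0 := by
        simp only [Finset.mul_sum]
        rw [Finset.sum_comm, Finset.sum_comm (s := Finset.univ (α := Fin 3 → ZMod p)),
          ← Finset.sum_sub_distrib]
        refine Finset.sum_congr rfl fun v _ => ?_
        push_cast
        rw [sub_mul, Finset.sum_mul, Finset.sum_mul]
        congr 1
        · refine Finset.sum_congr rfl fun l _ => ?_
          split_ifs <;> simp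
        · refine Finset.sum_congr rfl fun D _ => ?_
          split_ifs <;> simp
    _ = ((p : ℂ) - 1) * (-(quadraticChar (ZMod p) (disc q) : ℂ) * (p : ℂ) ^ 2) := by
        simp only [hL, hQ]
        rw [sum_ite_exists_smul (ne_zero_of_disc_ne_zero hd), ZMod.card,
          Finset.sum_const_zero]
        ring

/-- Let `p` be an odd prime, suppose no square of a nonzero linear form over `𝔽_p` is
apolar to `w`, and let `q` be a nonzero binary quadratic form apolar to `w` with
`Disc(q) ≠ 0` (Waring type `⟨1,1⟩` or `⟨2⟩`). Then `S(w) = -χ(Disc q)·p²`; in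
particular `S(w) = -p²` if `q` splits into two non-proportional linear factors over
`𝔽_p`, and `S(w) = p²` if `q` is irreducible over `𝔽_p`. -/
theorem stmt16 (p : ℕ) [Fact p.Prime] (hp : p ≠ 2) (w : Fin 6 → ZMod p)
    (h1 : ¬ ∃ l : Fin 2 → ZMod p, l ≠ 0 ∧
      ∀ h : Fin 4 → ZMod p, pair w (formMul (formMul l l) h) = 0)
    (q : Fin 3 → ZMod p) (hq : q ≠ 0)
    (hap : ∀ h : Fin 4 → ZMod p, pair w (formMul q h) = 0)
    (hd : disc q ≠ 0) :
    expSum p w = -(quadraticChar (ZMod p) (disc q) : ℂ) * (p : ℂ) ^ 2 ∧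
    ((∃ (l1 l2 : Fin 2 → ZMod p), l1 ≠ 0 ∧ l2 ≠ 0 ∧ q = formMul l1 l2 ∧
        ¬ ∃ c : ZMod p, l2 = c • l1) → expSum p w = -(p : ℂ) ^ 2) ∧
    ((¬ ∃ (l1 l2 : Fin 2 → ZMod p), l1 ≠ 0 ∧ l2 ≠ 0 ∧ q = formMul l1 l2) →
        expSum p w = (p : ℂ) ^ 2) := by
  have h2 : (2 : ZMod p) ≠ 0 := by
    intro h
    have h' : ((2 : ℕ) : ZMod p) = 0 := by exact_mod_cast h
    rw [ZMod.natCast_eq_zero_iff] at h'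
    exact hp ((Nat.prime_dvd_prime_iff_eq Fact.out Nat.prime_two).mp h')
  have hS := expSum_eq_of_apolar p h2 w h1 q hap hd
  refine ⟨hS, ?_, ?_⟩
  · rintro ⟨l1, l2, -, -, hql, -⟩
    have hsq : IsSquare (disc q) :=
      ⟨l1 0 * l2 1 - l1 1 * l2 0, by rw [hql, disc_formMul, sq]⟩
    rw [hS, (quadraticChar_one_iff_isSquare hd).mpr hsq]
    simp
  · intro hirr
    have hns : ¬ IsSquare (disc q) := by
      intro hsq
      obtain ⟨l, m, hlm⟩ := exists_formMul_eq_of_isSquare_disc h2 hsq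
      refine hirr ⟨l, m, ?_, ?_, hlm⟩
      · rintro rfl
        rw [hlm, disc_formMul] at hd
        simp at hd
      · rintro rfl
        rw [hlm, disc_formMul] at hd
        simp at hd
    rw [hS, quadraticChar_neg_one_iff_not_isSquare.mpr hns]
    simp
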